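/- There exist two non-equivalent logical synchrony networks on the complete directed graph on 3 vertices that have identical length-2 round-trip times λ_{i→j} + λ_{j→i} for all pairs i ≠ j. Concretely, with vertices {1,2,3}, take λ with λ_{1→2} = 3, λ_{2→1} = 2, λ_{2→3} = 1, λ_{3→2} = 3, λ_{1→3} = 0, λ_{3→1} = 2, and λ̂ with λ̂_{1→2} = 2, λ̂_{2→1} = 3, λ̂_{2→3} = 1, λ̂_{3→2} = 3, λ̂_{1→3} = 1, λ̂_{3→1} = 1: then λ_{i→j} + λ_{j→i} = λ̂_{i→j} + λ̂_{j→i} for all pairs, but λ_{1→2} + λ_{2→3} + λ_{3→1} = 6 ≠ 4 = λ̂_{1→2} + λ̂_{2→3} + λ̂_{3→1}, and no c : V → ℤ satisfies λ̂_{i→j} = λ_{i→j} + c_j − c_i for all edges. -/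

import Mathlib

/-- On the complete directed graph on 3 vertices (`E i j ↔ i ≠ j`),
the weightings `lam` (with `lam 0 1 = 3`, `lam 1 0 = 2`, `lam 1 2 = 1`,
`lam 2 1 = 3`, `lam 0 2 = 0`, `lam 2 0 = 2`) and `lamhat` (with `lamhat 0 1 = 2`,
`lamhat 1 0 = 3`, `lamhat 1 2 = 1`, `lamhat 2 1 = 3`, `lamhat 0 2 = 1`,
`lamhat 2 0 = 1`) have identical length-2 round-trip times for all pairs, but
different length-3 round-trip times (6 vs 4), and are not equivalent: no
`c : Fin 3 → ℤ` satisfies `lamhat i j = lam i j + c j - c i` on all edges. -/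
theorem lsn_length_two_roundtrips_insufficient :
    let lam : Fin 3 → Fin 3 → ℤ := ![![0, 3, 0], ![2, 0, 1], ![2, 3, 0]]
    let lamhat : Fin 3 → Fin 3 → ℤ := ![![0, 2, 1], ![3, 0, 1], ![1, 3, 0]]
    (∀ i j : Fin 3, i ≠ j → lam i j + lam j i = lamhat i j + lamhat j i) ∧
    lam 0 1 + lam 1 2 + lam 2 0 = 6 ∧
    lamhat 0 1 + lamhat 1 2 + lamhat 2 0 = 4 ∧
    ¬ ∃ c : Fin 3 → ℤ, ∀ i j : Fin 3, i ≠ j → lamhat i j = lam i j + c j - c i := by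
  refine ⟨by decide, by decide, by decide, ?_⟩
  rintro ⟨c, hc⟩
  -- The offsets `c` telescope around the directed cycle `0 → 1 → 2 → 0`, so the two
  -- length-3 round-trip times would agree; they are 6 and 4.
  have h01 := hc 0 1 (by decide)
  have h12 := hc 1 2 (by decide)
  have h20 := hc 2 0 (by decide)
  simp at h01 h12 h20
  omega
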